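/- Classification of solutions of the rank-one separation-of-variables system (Appendix B, n = 2 case): let N ≥ 1, η ∈ ℂ, k₁ ∈ ℂ with k₁ ≠ 0, and ξ₁, …, ξ_N ∈ ℂ such that the 2N complex numbers ξ_a − hη (a ∈ {1, …, N}, h ∈ {0, 1}) are pairwise distinct. Then a polynomial t ∈ ℂ[X] of degree N with leading coefficient k₁ satisfies t(ξ_a) · t(ξ_a − η) = 0 for all a ∈ {1, …, N} if and only if there exists h = (h₁, …, h_N) ∈ {0,1}^N such that t = k₁ ∏_{a=1}^{N} (X − (ξ_a − h_a η)); moreover the map h ↦ k₁ ∏_{a=1}^{N} (X − (ξ_a − h_a η)) is injective on {0,1}^N, so this system has exactly 2^N solutions. -/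

import Mathlib

open Polynomial BigOperators

/-!
Each equation `t(ξ_a) t(ξ_a - η) = 0` selects one of its two nodes as a root of `t`. The `N`
selected nodes are distinct, so they exhaust the roots of the degree-`N` polynomial `t`, which is
therefore determined by its leading coefficient. The selection is recovered from the root set,
because no two of the `2N` nodes coincide.
-/

section DistinctRoots

variable {R ι : Type*} [CommRing R] [IsDomain R] [Fintype ι]

theorem isRoot_prod_X_sub_C_iff_mem_range {y : ι → R} {z : R} :
    (∏ a, (X - C (y a))).IsRoot z ↔ z ∈ Set.range y := by
  simp only [isRoot_prod, Finset.mem_univ, true_and, root_X_sub_C, Set.mem_range]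

theorem range_eq_of_prod_X_sub_C_eq {ι' : Type*} [Fintype ι'] {y : ι → R} {y' : ι' → R}
    (h : ∏ a, (X - C (y a)) = ∏ a, (X - C (y' a))) : Set.range y = Set.range y' := by
  ext z
  rw [← isRoot_prod_X_sub_C_iff_mem_range, h, isRoot_prod_X_sub_C_iff_mem_range]

theorem prod_X_sub_C_dvd_of_injective {y : ι → R} (hy : Function.Injective y) {t : R[X]}
    (ht : ∀ a, t.IsRoot (y a)) : ∏ a, (X - C (y a)) ∣ t := by
  rcases eq_or_ne t 0 with rfl | ht0
  · exact dvd_zero _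
  have nodes_le_roots : Finset.univ.val.map y ≤ t.roots := by
    rw [Multiset.le_iff_subset (Finset.univ.nodup.map hy)]
    intro z hz
    obtain ⟨a, -, rfl⟩ := Multiset.mem_map.1 hz
    exact (mem_roots ht0).2 (ht a)
  simpa only [Multiset.map_map, Function.comp_def, Finset.prod_map_val] using
    (Multiset.prod_X_sub_C_dvd_iff_le_roots ht0 _).2 nodes_le_roots

theorem natDegree_leadingCoeff_isRoot_iff_eq_C_mul_prod {y : ι → R} (hy : Function.Injective y)
    {k : R} (hk : k ≠ 0) (t : R[X]) :
    (t.natDegree = Fintype.card ι ∧ t.leadingCoeff = k ∧ ∀ a, t.IsRoot (y a)) ↔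
      t = C k * ∏ a, (X - C (y a)) := by
  have monic : (∏ a, (X - C (y a))).Monic := monic_prod_X_sub_C y Finset.univ
  have natDegree_eq : (∏ a, (X - C (y a))).natDegree = Fintype.card ι :=
    natDegree_finsetProd_X_sub_C_eq_card Finset.univ y
  constructor
  · rintro ⟨hdeg, rfl, hroot⟩
    exact eq_leadingCoeff_mul_of_monic_of_dvd_of_natDegree_le monic
      (prod_X_sub_C_dvd_of_injective hy hroot) (hdeg.trans natDegree_eq.symm).le
  · rintro rfl
    refine ⟨by rw [natDegree_C_mul hk, natDegree_eq],
      by rw [leadingCoeff_mul_monic monic, leadingCoeff_C], fun a => ?_⟩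
    exact root_mul_left_of_isRoot _
      (isRoot_prod_X_sub_C_iff_mem_range.2 (Set.mem_range_self a))

end DistinctRoots

section Selection

variable {α ι : Type*} {κ : ι → Type*} {x : ∀ a, κ a → α}

theorem injective_selection (hx : Function.Injective fun z : Σ a, κ a => x z.1 z.2)
    (h : ∀ a, κ a) : Function.Injective fun a => x a (h a) := fun a b hab =>
  congrArg Sigma.fst (@hx ⟨a, h a⟩ ⟨b, h b⟩ hab)

theorem injective_range_selection (hx : Function.Injective fun z : Σ a, κ a => x z.1 z.2) :
    Function.Injective fun h : ∀ a, κ a => Set.range fun a => x a (h a) := by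
  intro h h' hrange
  funext a
  obtain ⟨b, hb⟩ : x a (h a) ∈ Set.range fun b => x b (h' b) :=
    hrange.subset (Set.mem_range_self a)
  obtain ⟨rfl, heq⟩ := Sigma.mk.inj (@hx ⟨b, h' b⟩ ⟨a, h a⟩ hb)
  exact (eq_of_heq heq).symm

end Selection

theorem rank_one_sov_system_classification_general {R ι : Type*} [CommRing R] [IsDomain R]
    [Fintype ι] {κ : ι → Type*} [∀ a, Fintype (κ a)] {k : R} (hk : k ≠ 0) (x : ∀ a, κ a → R)
    (hx : Function.Injective fun z : Σ a, κ a => x z.1 z.2) :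
    (∀ t : R[X],
      (t.natDegree = Fintype.card ι ∧ t.leadingCoeff = k ∧ ∀ a, ∏ b, t.eval (x a b) = 0)
        ↔ ∃ h : ∀ a, κ a, t = C k * ∏ a, (X - C (x a (h a))))
    ∧ Function.Injective fun h : ∀ a, κ a => C k * ∏ a, (X - C (x a (h a))) := by
  refine ⟨fun t => ?_, fun h h' heq => ?_⟩
  · have exists_selection :
        (∀ a, ∏ b, t.eval (x a b) = 0) ↔ ∃ h : ∀ a, κ a, ∀ a, t.IsRoot (x a (h a)) := by
      simp only [Finset.prod_eq_zero_iff, Finset.mem_univ, true_and, IsRoot.def]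
      exact Classical.skolem
    simp only [exists_selection, ← exists_and_left,
      natDegree_leadingCoeff_isRoot_iff_eq_C_mul_prod (injective_selection hx _) hk]
  · exact injective_range_selection hx
      (range_eq_of_prod_X_sub_C_eq (mul_left_cancel₀ (C_ne_zero.2 hk) heq))

/-- classification of the solutions of the rank-one separation of
variables system: a degree-`N` polynomial with leading coefficient `k₁`
satisfies `t(ξ_a) t(ξ_a − η) = 0` for all `a` iff it is of the form
`k₁ ∏_a (X − (ξ_a − h_a η))` for some `h ∈ {0,1}^N`; the parametrization is
injective, so there are exactly `2^N` solutions. -/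
theorem rank_one_sov_system_classification (N : ℕ) (hN : 1 ≤ N) (η k₁ : ℂ)
    (hk : k₁ ≠ 0) (ξ : Fin N → ℂ)
    (hdist : Function.Injective fun z : Fin N × Fin 2 => ξ z.1 - ((z.2 : ℕ) : ℂ) * η) :
    (∀ t : Polynomial ℂ,
      (t.natDegree = N ∧ t.leadingCoeff = k₁ ∧
          ∀ a : Fin N, t.eval (ξ a) * t.eval (ξ a - η) = 0)
        ↔ ∃ h : Fin N → Fin 2,
            t = C k₁ * ∏ a : Fin N, (X - C (ξ a - ((h a : ℕ) : ℂ) * η)))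
    ∧ Function.Injective fun h : Fin N → Fin 2 =>
        C k₁ * ∏ a : Fin N, (X - C (ξ a - ((h a : ℕ) : ℂ) * η)) := by
  simpa [Fin.prod_univ_two] using rank_one_sov_system_classification_general hk
    (fun a (b : Fin 2) => ξ a - ((b : ℕ) : ℂ) * η) (hdist.comp (Equiv.sigmaEquivProd _ _).injective)
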